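/- arXiv:1606.04970 — 9 statements merged into one kernel-verified Lean document; each statement's English description precedes it below -/
import Mathlib

section
/- Assume p(p+1)/2 > m, that the SDP feasible set 𝒞 is compact, and that for every Y ∈ ℳ the matrices A_1 Y, ..., A_m Y are linearly independent in ℝ^{n×p}. Then the set of symmetric cost matrices C for which there exists a second-order critical point Y of the factorized problem that is not globally optimal (i.e., with Tr(C Y Yᵀ) > inf{Tr(C X) : X ∈ 𝒞}) is a null set of symmetric matrices. Consequently, for all C outside this null set, every second-order critical point Y satisfies Tr(C Y Yᵀ) ≤ Tr(C X) for all X ∈ 𝒞, so X = Y Yᵀ is globally optimal for the SDP and Y is globally optimal for the factorized problem. -/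
open Matrix MeasureTheory

noncomputable section

/-- Frobenius inner product `⟨A, B⟩ = Tr(Aᵀ B)`. -/
def frobInner {n p : ℕ} (A B : Matrix (Fin n) (Fin p) ℝ) : ℝ := (Aᵀ * B).trace

/-- Frobenius norm. -/
def frobNorm {n p : ℕ} (A : Matrix (Fin n) (Fin p) ℝ) : ℝ := Real.sqrt (frobInner A A)

/-- The constraint map 𝒜, `𝒜(X) i = Tr(A i * X)`. -/
def Aop {n m : ℕ} (A : Fin m → Matrix (Fin n) (Fin n) ℝ) (X : Matrix (Fin n) (Fin n) ℝ) :
    Fin m → ℝ := fun i => (A i * X).trace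

/-- The adjoint 𝒜*, `𝒜*(μ) = ∑ i, μ i • A i`. -/
def Aadj {n m : ℕ} (A : Fin m → Matrix (Fin n) (Fin n) ℝ) (μ : Fin m → ℝ) :
    Matrix (Fin n) (Fin n) ℝ := ∑ i, μ i • A i

/-- The SDP feasible set 𝒞. -/
def sdpFeas {n m : ℕ} (A : Fin m → Matrix (Fin n) (Fin n) ℝ) (b : Fin m → ℝ) :
    Set (Matrix (Fin n) (Fin n) ℝ) := {X | X.IsSymm ∧ Aop A X = b ∧ X.PosSemidef}

/-- Optimal value `f* = inf {Tr(C X) : X ∈ 𝒞}` of the SDP. -/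
def fstar {n m : ℕ} (A : Fin m → Matrix (Fin n) (Fin n) ℝ) (b : Fin m → ℝ)
    (C : Matrix (Fin n) (Fin n) ℝ) : ℝ := sInf ((fun X => (C * X).trace) '' sdpFeas A b)

/-- The factorized feasible set `ℳ_p = {Y : 𝒜(Y Yᵀ) = b}`. -/
def facFeas {n m : ℕ} (A : Fin m → Matrix (Fin n) (Fin n) ℝ) (b : Fin m → ℝ) (p : ℕ) :
    Set (Matrix (Fin n) (Fin p) ℝ) := {Y | Aop A (Y * Yᵀ) = b}

/-- Tangent space `T_Yℳ = {Ydot : 𝒜(Ydot Yᵀ + Y Ydotᵀ) = 0}`. -/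
def tangentSet {n m p : ℕ} (A : Fin m → Matrix (Fin n) (Fin n) ℝ)
    (Y : Matrix (Fin n) (Fin p) ℝ) : Set (Matrix (Fin n) (Fin p) ℝ) :=
  {Ydot | Aop A (Ydot * Yᵀ + Y * Ydotᵀ) = 0}

/-- Second-order critical point of the factorized problem. -/
def IsSOCP {n m p : ℕ} (A : Fin m → Matrix (Fin n) (Fin n) ℝ) (b : Fin m → ℝ)
    (C : Matrix (Fin n) (Fin n) ℝ) (Y : Matrix (Fin n) (Fin p) ℝ) : Prop :=
  Y ∈ facFeas A b p ∧ ∃ μ : Fin m → ℝ,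
    (C - Aadj A μ) * Y = 0 ∧
    ∀ Ydot ∈ tangentSet A Y, 0 ≤ frobInner Ydot ((C - Aadj A μ) * Ydot)

/-- The real vector space of symmetric `n × n` matrices. -/
def symmSpace (n : ℕ) : Submodule ℝ (Matrix (Fin n) (Fin n) ℝ) where
  carrier := {X | X.IsSymm}
  add_mem' := fun ha hb => ha.add hb
  zero_mem' := Matrix.isSymm_zero
  smul_mem' := fun c X hX => by
    show (c • X)ᵀ = c • X
    rw [Matrix.transpose_smul, hX]

instance (n : ℕ) : MeasurableSpace ↥(symmSpace n) := borel _

/-- A set of symmetric matrices is null if it has measure zero for every additive Haar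
measure on the finite-dimensional real vector space of symmetric `n × n` matrices. -/
def IsNullSymmSet (n : ℕ) (S : Set (Matrix (Fin n) (Fin n) ℝ)) : Prop :=
  ∀ μ : Measure ↥(symmSpace n), μ.IsAddHaarMeasure →
    μ {C : ↥(symmSpace n) | (C : Matrix (Fin n) (Fin n) ℝ) ∈ S} = 0

theorem null_range_of_finrank_lt {E F : Type*} [NormedAddCommGroup E] [NormedSpace ℝ E]
    [FiniteDimensional ℝ E] [NormedAddCommGroup F] [NormedSpace ℝ F] [FiniteDimensional ℝ F]
    [MeasurableSpace F] [BorelSpace F] (μ : Measure F) [μ.IsAddHaarMeasure]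
    (f : E → F) (hf : Differentiable ℝ f) (h : Module.finrank ℝ E < Module.finrank ℝ F) :
    μ (Set.range f) = 0 := by
  obtain ⟨i, hi⟩ := (finrank_le_iff_exists_linearMap (R := ℝ) (M := E) (M' := F)).1 h.le
  obtain ⟨π, hπ⟩ := i.exists_leftInverse_of_injective (LinearMap.ker_eq_bot.2 hi)
  let P : F →L[ℝ] E := LinearMap.toContinuousLinearMap π
  have hP : Function.Surjective P := fun x => ⟨i x, by
    exact LinearMap.congr_fun hπ x⟩
  have hr : Set.range f = (f ∘ P) '' Set.univ := by
    rw [Set.image_univ, hP.range_comp]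
  rw [hr]
  refine addHaar_image_eq_zero_of_det_fderivWithin_eq_zero μ (f := f ∘ P)
    (f' := fun x => (fderiv ℝ f (P x)).comp P) (fun x _ => ?_) (fun x _ => ?_)
  · exact ((hf (P x)).hasFDerivAt.comp x P.hasFDerivAt).hasFDerivWithinAt
  · by_contra hdet
    have hu : IsUnit (LinearMap.det (((fderiv ℝ f (P x)).comp P : F →L[ℝ] F) : F →ₗ[ℝ] F)) :=
      isUnit_iff_ne_zero.2 hdet
    have hb := (LinearMap.equivOfIsUnitDet hu).injective
    have hPi : Function.Injective (P : F →ₗ[ℝ] E) := by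
      intro a b hab
      apply hb
      have : P a = P b := hab
      rw [LinearMap.equivOfIsUnitDet_apply, LinearMap.equivOfIsUnitDet_apply]
      show ((fderiv ℝ f (P x)).comp P) a = ((fderiv ℝ f (P x)).comp P) b
      rw [ContinuousLinearMap.comp_apply, ContinuousLinearMap.comp_apply, this]
    exact absurd (LinearMap.finrank_le_finrank_of_injective hPi) (not_le.2 h)

/-- coefficient matrix `L = [I, -Z]` -/
def Lmat {n : ℕ} (s : Finset (Fin n)) (Z : {i // i ∉ s} × {i // i ∈ s} → ℝ)
    (k : {i // i ∉ s}) (i : Fin n) : ℝ :=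
  if h : i ∈ s then -Z (k, ⟨i, h⟩) else if (k : Fin n) = i then 1 else 0

/-- parametrization of the bad matrices -/
def param {n m : ℕ} (A : Fin m → Matrix (Fin n) (Fin n) ℝ) (s : Finset (Fin n))
    (e : (Sym2 {i // i ∉ s} → ℝ) × ({i // i ∉ s} × {i // i ∈ s} → ℝ) × (Fin m → ℝ)) :
    Matrix (Fin n) (Fin n) ℝ := Matrix.of fun i j =>
  (∑ k, ∑ l, Lmat s e.2.1 k i * e.1 s(k, l) * Lmat s e.2.1 l j) + ∑ a, e.2.2 a * A a i j

/-- symmetrization as a linear map -/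
def symmetrize (n : ℕ) : (Fin n → Fin n → ℝ) →ₗ[ℝ] ↥(symmSpace n) where
  toFun X := ⟨Matrix.of fun i j => (1/2 : ℝ) * (X i j + X j i), by
    show Matrix.IsSymm _
    ext i j; simp [add_comm]⟩
  map_add' X Y := by ext i j; simp; ring
  map_smul' c X := by ext i j; simp; ring

theorem finrank_symmSpace_ge (n : ℕ) :
    (n + 1).choose 2 ≤ Module.finrank ℝ ↥(symmSpace n) := by
  let g : (Sym2 (Fin n) → ℝ) →ₗ[ℝ] ↥(symmSpace n) :=
    { toFun := fun w => ⟨Matrix.of fun i j => w s(i, j), by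
        show Matrix.IsSymm _
        ext i j; simp [Sym2.eq_swap]⟩
      map_add' := fun X Y => by ext i j; simp
      map_smul' := fun c X => by ext i j; simp }
  have hg : Function.Injective g := by
    intro w w' h
    funext z
    induction z using Sym2.ind with
    | _ i j =>
      have := congrArg (fun X : ↥(symmSpace n) => (X : Matrix (Fin n) (Fin n) ℝ) i j) h
      simpa [g] using this
  have := LinearMap.finrank_le_finrank_of_injective hg
  simpa [Sym2.card] using this

theorem arith_dim (K n m p : ℕ) (h : K + p = n) (hpm : 2 * m < p * (p + 1)) :
    (K + 1).choose 2 + (K * p + m) < (n + 1).choose 2 := by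
  subst h
  have h1 : ∀ k : ℕ, 2 * (k + 1).choose 2 = k * (k + 1) := by
    intro k
    induction k with
    | zero => simp
    | succ k ih =>
      rw [Nat.choose_succ_succ' (k + 1) 1, mul_add, ih]
      simp
      ring
  have h2 := h1 K
  have h3 := h1 (K + p)
  nlinarith

theorem exists_rows {n p : ℕ} (Y : Matrix (Fin n) (Fin p) ℝ)
    (hY : ∀ z, Y *ᵥ z = 0 → z = 0) :
    ∃ s : Finset (Fin n), s.card = p ∧ LinearIndependent ℝ (fun j : {i // i ∈ s} => Y j) ∧
      ∀ i, ∃ c : {i // i ∈ s} → ℝ, Y i = ∑ j, c j • Y j := by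
  obtain ⟨κ, a, ha, hsp, hli⟩ := exists_linearIndependent' ℝ Y.row
  have hfin : Finite κ := Finite.of_injective a ha
  have : Fintype κ := Fintype.ofFinite κ
  let s : Finset (Fin n) := Finset.univ.image a
  have hmem : ∀ k, a k ∈ s := fun k => Finset.mem_image_of_mem _ (Finset.mem_univ _)
  let e : κ ≃ {i // i ∈ s} := Equiv.ofBijective (fun k => ⟨a k, hmem k⟩) ⟨fun x y h => ha (by
    simpa using h), fun ⟨i, hi⟩ => by
      obtain ⟨k, -, hk⟩ := Finset.mem_image.1 hi
      exact ⟨k, Subtype.ext hk⟩⟩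
  have hcomp : (fun j : {i // i ∈ s} => Y j) ∘ e = Y.row ∘ a := by
    funext k; rfl
  have hli' : LinearIndependent ℝ (fun j : {i // i ∈ s} => Y j) := by
    rw [← linearIndependent_equiv e, hcomp]; exact hli
  have hrange : Set.range (fun j : {i // i ∈ s} => Y j) = Set.range (Y.row ∘ a) := by
    rw [← hcomp, e.surjective.range_comp]
  have hcol : LinearIndependent ℝ Y.col := by
    rw [← Matrix.mulVec_injective_iff]
    intro x y hxy
    have := hY (x - y) (by rw [Matrix.mulVec_sub]; exact sub_eq_zero.2 hxy)
    exact sub_eq_zero.1 this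
  have hrank : Y.rank = p := by
    have h : LinearIndependent ℝ Yᵀ.row := hcol
    rw [← Matrix.rank_transpose, h.rank_matrix]; simp
  refine ⟨s, ?_, hli', fun i => ?_⟩
  · have h1 := finrank_span_eq_card hli'
    rw [hrange, hsp, ← Matrix.rank_eq_finrank_span_row, hrank] at h1
    simpa using h1.symm
  · have hi : Y i ∈ Submodule.span ℝ (Set.range (fun j : {i // i ∈ s} => Y j)) := by
      rw [hrange, hsp]; exact Submodule.subset_span ⟨i, rfl⟩
    obtain ⟨c, hc⟩ := (Submodule.mem_span_range_iff_exists_fun ℝ).1 hi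
    exact ⟨c, hc.symm⟩

theorem mem_param {n m p : ℕ} (A : Fin m → Matrix (Fin n) (Fin n) ℝ)
    (C : Matrix (Fin n) (Fin n) ℝ) (μ : Fin m → ℝ) (Y : Matrix (Fin n) (Fin p) ℝ)
    (hS : (C - Aadj A μ).IsSymm) (hSY : (C - Aadj A μ) * Y = 0)
    (hY : ∀ z, Y *ᵥ z = 0 → z = 0) :
    ∃ s : Finset (Fin n), s.card = p ∧ ∃ e, param A s e = C := by
  obtain ⟨s, hs, hli, hc⟩ := exists_rows Y hY
  choose c hc using hc
  refine ⟨s, hs, ?_⟩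
  set S := C - Aadj A μ with hSdef
  have hsymm : ∀ i j, S i j = S j i := fun i j => hS.apply j i
  have hdec : ∀ g : Fin n → Fin p → ℝ,
      ∑ i, g i = ∑ i : {i // i ∈ s}, g i + ∑ i : {i // i ∉ s}, g i := by
    intro g
    rw [← Fintype.sum_subtype_add_sum_subtype (fun i => i ∈ s) g]
    congr 1
    exact Finset.sum_congr (by ext; simp) fun _ _ => rfl
  -- columns in `s` are determined by the others
  have hrow : ∀ (i : Fin n) (j : {i // i ∈ s}),
      S i j = - ∑ k : {i // i ∉ s}, S i k * c k j := by
    intro i j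
    have h0 : ∑ l, S i l • Y l = 0 := by
      funext q
      have := congrFun (congrFun hSY i) q
      simpa [Matrix.mul_apply, Finset.sum_apply] using this
    have h1 : ∑ j : {i // i ∈ s}, (S i j + ∑ k : {i // i ∉ s}, S i k * c k j) • Y j = 0 := by
      rw [← h0, hdec (fun l => S i l • Y l)]
      simp only [add_smul, Finset.sum_add_distrib, Finset.sum_smul, mul_smul]
      congr 1
      rw [Finset.sum_comm]
      refine Finset.sum_congr rfl fun k _ => ?_
      rw [← Finset.smul_sum, ← hc]
    have := Fintype.linearIndependent_iff.1 hli _ h1 j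
    linarith
  let w : Sym2 {i // i ∉ s} → ℝ := Sym2.lift ⟨fun k l => S k l, fun k l => hsymm _ _⟩
  refine ⟨(w, fun q => c q.1 q.2, μ), ?_⟩
  have hL : ∀ i j, S i j = ∑ l : {i // i ∉ s}, S i l * Lmat s (fun q => c q.1 q.2) l j := by
    intro i j
    by_cases hj : j ∈ s
    · rw [hrow i ⟨j, hj⟩]
      simp [Lmat, hj]
    · rw [Finset.sum_eq_single (⟨j, hj⟩ : {i // i ∉ s})]
      · simp [Lmat, hj]
      · intro l _ hl
        have : (l : Fin n) ≠ j := fun h => hl (Subtype.ext h)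
        simp [Lmat, hj, this]
      · simp
  ext i j
  have hij : C i j = S i j + ∑ a, μ a * A a i j := by
    simp [hSdef, Aadj, Matrix.sum_apply]
  rw [hij, hL i j]
  simp only [param, Matrix.of_apply]
  congr 1
  rw [Finset.sum_comm]
  refine Finset.sum_congr rfl fun l _ => ?_
  rw [hsymm i l, hL l i, Finset.sum_mul]
  refine Finset.sum_congr rfl fun k _ => ?_
  simp only [w, Sym2.lift_mk]
  rw [hsymm l k]; ring

theorem socp_opt {n m p : ℕ} (A : Fin m → Matrix (Fin n) (Fin n) ℝ) (b : Fin m → ℝ)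
    (C : Matrix (Fin n) (Fin n) ℝ) (Y : Matrix (Fin n) (Fin p) ℝ) (μ : Fin m → ℝ)
    (hS : (C - Aadj A μ).IsSymm) (hfeas : Y ∈ facFeas A b p)
    (hSY : (C - Aadj A μ) * Y = 0)
    (h2 : ∀ Ydot ∈ tangentSet A Y, 0 ≤ frobInner Ydot ((C - Aadj A μ) * Ydot))
    (z : Fin p → ℝ) (hz : z ≠ 0) (hYz : Y *ᵥ z = 0) :
    ∀ X ∈ sdpFeas A b, (C * (Y * Yᵀ)).trace ≤ (C * X).trace := by
  set S := C - Aadj A μ with hSdef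
  have hzz : 0 < z ⬝ᵥ z := by
    have := dotProduct_star_self_pos_iff.2 hz
    simpa using this
  have hpos : ∀ x : Fin n → ℝ, 0 ≤ x ⬝ᵥ (S *ᵥ x) := by
    intro x
    have h0 : Matrix.vecMulVec x z * Yᵀ = 0 := by
      rw [Matrix.vecMulVec_mul, Matrix.vecMul_transpose, hYz]; ext; simp [Matrix.vecMulVec]
    have h0' : Y * (Matrix.vecMulVec x z)ᵀ = 0 := by
      have := congrArg Matrix.transpose h0
      simpa using this
    have h := h2 (Matrix.vecMulVec x z) (by
      show Aop A _ = 0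
      rw [h0, h0']; funext i; simp [Aop])
    have he : frobInner (Matrix.vecMulVec x z) (S * Matrix.vecMulVec x z)
        = (x ⬝ᵥ (S *ᵥ x)) * (z ⬝ᵥ z) := by
      unfold frobInner
      rw [Matrix.mul_vecMulVec, Matrix.transpose_vecMulVec, Matrix.vecMulVec_mul_vecMulVec]
      simp [Matrix.trace_vecMulVec]
    rw [he] at h
    exact nonneg_of_mul_nonneg_left h hzz
  have hval : ∀ X, Aop A X = b → (C * X).trace = (S * X).trace + ∑ i, μ i * b i := by
    intro X hX
    have : C = S + Aadj A μ := by simp [hSdef]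
    rw [this, Matrix.add_mul, Matrix.trace_add, ← hX]
    simp [Aadj, Aop, Matrix.sum_mul, Matrix.trace_sum]
  intro X hX
  rw [hval X hX.2.1, hval _ hfeas, ← Matrix.mul_assoc, hSY]
  obtain ⟨k, v, hv⟩ := Matrix.posSemidef_iff_eq_sum_vecMulVec.1 hX.2.2
  have : 0 ≤ (S * X).trace := by
    rw [hv, Matrix.mul_sum, Matrix.trace_sum]
    refine Finset.sum_nonneg fun i _ => ?_
    rw [Matrix.mul_vecMulVec, Matrix.trace_vecMulVec, dotProduct_comm]
    simpa using hpos (v i)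
  simpa using this

theorem fac_mem {n m p : ℕ} (A : Fin m → Matrix (Fin n) (Fin n) ℝ) (b : Fin m → ℝ)
    (Y : Matrix (Fin n) (Fin p) ℝ) (h : Y ∈ facFeas A b p) : Y * Yᵀ ∈ sdpFeas A b := by
  refine ⟨?_, h, ?_⟩
  · simp [Matrix.IsSymm]
  · simpa using Matrix.posSemidef_self_mul_conjTranspose Y

theorem Aadj_symm {n m : ℕ} (A : Fin m → Matrix (Fin n) (Fin n) ℝ) (hA : ∀ i, (A i).IsSymm)
    (μ : Fin m → ℝ) : (Aadj A μ).IsSymm := by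
  have : Aadj A μ ∈ symmSpace n :=
    Submodule.sum_mem _ fun i _ => Submodule.smul_mem _ _ (hA i)
  exact this

section
attribute [local instance] Matrix.normedAddCommGroup Matrix.normedSpace

theorem param_null {n m p : ℕ} (A : Fin m → Matrix (Fin n) (Fin n) ℝ) (s : Finset (Fin n))
    (hs : s.card = p) (hpm : 2 * m < p * (p + 1))
    (μ : Measure ↥(symmSpace n)) (hμ : μ.IsAddHaarMeasure) :
    μ {C : ↥(symmSpace n) | ∃ e, param A s e = (C : Matrix (Fin n) (Fin n) ℝ)} = 0 := by
  let f : ((Sym2 {i // i ∉ s} → ℝ) × ({i // i ∉ s} × {i // i ∈ s} → ℝ) × (Fin m → ℝ)) →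
      ↥(symmSpace n) := fun e => LinearMap.toContinuousLinearMap (symmetrize n) (param A s e)
  have hf : Differentiable ℝ f := by
    refine (LinearMap.toContinuousLinearMap (symmetrize n)).differentiable.comp ?_
    refine differentiable_pi.2 fun i => differentiable_pi.2 fun j => ?_
    have hL : ∀ k i, Differentiable ℝ (fun e : ((Sym2 {i // i ∉ s} → ℝ) ×
        ({i // i ∉ s} × {i // i ∈ s} → ℝ) × (Fin m → ℝ)) => Lmat s e.2.1 k i) := by
      intro k i
      unfold Lmat
      split_ifs <;> fun_prop
    simp only [param, Matrix.of_apply]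
    fun_prop
  refine measure_mono_null ?_ (@null_range_of_finrank_lt _ _ _ _ _ _ _ _ _ ⟨rfl⟩ μ hμ f hf ?_)
  · rintro C ⟨e, he⟩
    refine ⟨e, ?_⟩
    ext i j
    have hC : (C : Matrix (Fin n) (Fin n) ℝ).IsSymm := C.2
    have := hC.apply i j
    simp only [f, he]
    simp [symmetrize, this]
    ring
  · refine lt_of_lt_of_le ?_ (finrank_symmSpace_ge n)
    have := arith_dim (Fintype.card {i // i ∉ s}) n m p (by
      have := Fintype.card_subtype_compl (fun i => i ∈ s)
      have h2 := s.card_le_univ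
      simp at this h2 ⊢; omega) hpm
    simp [Sym2.card, hs] at this ⊢
    simpa using this
end

/-- main theorem. Assuming `p(p+1)/2 > m`, compactness of 𝒞 and constraint
qualifications on all of ℳ, the set of symmetric cost matrices `C` admitting a
non-globally-optimal second-order critical point is null; consequently, outside this null
set every second-order critical point is globally optimal for the factorized problem and
`Y Yᵀ` is globally optimal for the SDP. -/
theorem sdp_burer_monteiro_generic_global_optimality
    (n m p : ℕ) (hn : 0 < n) (hm : 0 < m) (hp : 0 < p)
    (A : Fin m → Matrix (Fin n) (Fin n) ℝ) (hA : ∀ i, (A i).IsSymm) (b : Fin m → ℝ)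
    (hpm : 2 * m < p * (p + 1))
    (hcompact : IsCompact (sdpFeas A b))
    (hCQ : ∀ Y ∈ facFeas A b p, LinearIndependent ℝ (fun i => A i * Y)) :
    IsNullSymmSet n {C | ∃ Y : Matrix (Fin n) (Fin p) ℝ,
        IsSOCP A b C Y ∧ fstar A b C < (C * (Y * Yᵀ)).trace} ∧
    ∀ C : Matrix (Fin n) (Fin n) ℝ, C.IsSymm →
      C ∉ {C | ∃ Y : Matrix (Fin n) (Fin p) ℝ,
        IsSOCP A b C Y ∧ fstar A b C < (C * (Y * Yᵀ)).trace} →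
      ∀ Y : Matrix (Fin n) (Fin p) ℝ, IsSOCP A b C Y →
        (∀ X ∈ sdpFeas A b, (C * (Y * Yᵀ)).trace ≤ (C * X).trace) ∧
        (∀ Z ∈ facFeas A b p, (C * (Y * Yᵀ)).trace ≤ (C * (Z * Zᵀ)).trace) := by
  constructor
  · intro ν hν
    refine measure_mono_null (t := ⋃ s : {s : Finset (Fin n) // s.card = p},
      {C : ↥(symmSpace n) | ∃ e, param A s e = (C : Matrix (Fin n) (Fin n) ℝ)}) ?_
      (measure_iUnion_null fun s => param_null A s.1 s.2 hpm ν hν)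
    rintro C ⟨Y, ⟨hY, μ, hSY, h2⟩, hlt⟩
    have hS : ((C : Matrix (Fin n) (Fin n) ℝ) - Aadj A μ).IsSymm :=
      Matrix.IsSymm.sub C.2 (Aadj_symm A hA μ)
    by_cases hz : ∀ z, Y *ᵥ z = 0 → z = 0
    · obtain ⟨s, hs, he⟩ := mem_param A C μ Y hS hSY hz
      exact Set.mem_iUnion.2 ⟨⟨s, hs⟩, he⟩
    · push Not at hz
      obtain ⟨z, hYz, hz⟩ := hz
      have := socp_opt A b C Y μ hS hY hSY h2 z hz hYz
      refine absurd hlt (not_lt.2 ?_)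
      refine le_csInf ⟨_, _, fac_mem A b Y hY, rfl⟩ ?_
      rintro _ ⟨X, hX, rfl⟩
      exact this X hX
  · intro C hC hbad Y hY
    have key : ∀ X ∈ sdpFeas A b, (C * (Y * Yᵀ)).trace ≤ (C * X).trace := by
      intro X hX
      have h1 : (C * (Y * Yᵀ)).trace ≤ fstar A b C := by
        by_contra h
        exact hbad ⟨Y, hY, not_le.1 h⟩
      refine h1.trans (csInf_le ?_ ⟨X, hX, rfl⟩)
      refine (hcompact.image ?_).bddBelow
      fun_prop
    exact ⟨key, fun Z hZ => key _ (fac_mem A b Z hZ)⟩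

end
end

section
/- Let Y ∈ ℳ, μ ∈ ℝ^m, and S = C − 𝒜*(μ). Assume 𝒞 is compact, and let R = sup{Tr(X) : X ∈ 𝒞} < ∞. If ε_g, ε_H ≥ 0 are such that ‖2 S Y‖ ≤ ε_g and S + (ε_H/2) I_n is positive semidefinite, then the optimality gap satisfies 0 ≤ 2(Tr(C Y Yᵀ) − f*) ≤ ε_H R + ε_g √R. -/
open Matrix MeasureTheory

noncomputable section

open scoped MatrixOrder Matrix.Norms.L2Operator in
lemma aux_trace_mul_nonneg {n : ℕ} {P X : Matrix (Fin n) (Fin n) ℝ}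
    (hP : P.PosSemidef) (hX : X.PosSemidef) : 0 ≤ (P * X).trace := by
  obtain ⟨B, rfl⟩ := CStarAlgebra.nonneg_iff_eq_star_mul_self.mp hX.nonneg
  rw [Matrix.star_eq_conjTranspose]
  have h := (hP.mul_mul_conjTranspose_same B).trace_nonneg
  rwa [Matrix.mul_assoc, Matrix.trace_mul_comm, Matrix.mul_assoc] at h

lemma aux_frobInner_eq {n p : ℕ} (A B : Matrix (Fin n) (Fin p) ℝ) :
    frobInner A B = ∑ x : Fin p × Fin n, A x.2 x.1 * B x.2 x.1 := by
  simp [frobInner, Matrix.trace, Matrix.mul_apply, Fintype.sum_prod_type]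

lemma aux_frob_cs {n p : ℕ} (A B : Matrix (Fin n) (Fin p) ℝ) :
    frobInner A B ≤ frobNorm A * frobNorm B := by
  unfold frobNorm
  simp only [aux_frobInner_eq, ← pow_two]
  exact Real.sum_mul_le_sqrt_mul_sqrt _ _ _

lemma aux_trace_Aadj {n m : ℕ} (A : Fin m → Matrix (Fin n) (Fin n) ℝ) (μ : Fin m → ℝ)
    (X : Matrix (Fin n) (Fin n) ℝ) : (Aadj A μ * X).trace = ∑ i, μ i * Aop A X i := by
  simp [Aadj, Aop, Matrix.sum_mul, Matrix.trace_sum]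

/-- optimality gap bound (Lemma on approximate criticality).
If `‖2 S Y‖ ≤ ε_g` and `S + (ε_H/2) I ⪰ 0`, then `0 ≤ 2(f(Y) − f*) ≤ ε_H R + ε_g √R`. -/
theorem optimality_gap_bound
    (n m p : ℕ) (hn : 0 < n) (hm : 0 < m) (hp : 0 < p)
    (A : Fin m → Matrix (Fin n) (Fin n) ℝ) (hA : ∀ i, (A i).IsSymm) (b : Fin m → ℝ)
    (C : Matrix (Fin n) (Fin n) ℝ) (hC : C.IsSymm)
    (Y : Matrix (Fin n) (Fin p) ℝ) (hY : Y ∈ facFeas A b p)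
    (μ : Fin m → ℝ) (S : Matrix (Fin n) (Fin n) ℝ) (hS : S = C - Aadj A μ)
    (hcompact : IsCompact (sdpFeas A b))
    (R : ℝ) (hR : R = sSup (Matrix.trace '' sdpFeas A b))
    (εg εH : ℝ) (hεg : 0 ≤ εg) (hεH : 0 ≤ εH)
    (hgrad : frobNorm ((2 : ℝ) • (S * Y)) ≤ εg)
    (hhess : (S + (εH / 2) • (1 : Matrix (Fin n) (Fin n) ℝ)).PosSemidef) :
    0 ≤ 2 * ((C * (Y * Yᵀ)).trace - fstar A b C) ∧
    2 * ((C * (Y * Yᵀ)).trace - fstar A b C) ≤ εH * R + εg * Real.sqrt R := by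
  have hYC : Y * Yᵀ ∈ sdpFeas A b := by
    refine ⟨?_, hY, ?_⟩
    · simp [Matrix.IsSymm, Matrix.transpose_mul]
    · simpa using Matrix.posSemidef_self_mul_conjTranspose Y
  have hbT : BddAbove (Matrix.trace '' sdpFeas A b) :=
    (hcompact.image (Continuous.matrix_trace continuous_id)).bddAbove
  have hbC : BddBelow ((fun X => (C * X).trace) '' sdpFeas A b) :=
    (hcompact.image
      (Continuous.matrix_trace (continuous_const.matrix_mul continuous_id))).bddBelow
  have hle : ∀ X ∈ sdpFeas A b, X.trace ≤ R := fun X hX => by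
    rw [hR]; exact le_csSup hbT ⟨X, hX, rfl⟩
  have hsplit : ∀ X ∈ sdpFeas A b, (C * X).trace = (S * X).trace + ∑ i, μ i * b i := by
    intro X hX
    have h := aux_trace_Aadj A μ X
    rw [hX.2.1] at h
    rw [hS, Matrix.sub_mul, Matrix.trace_sub, h]; ring
  refine ⟨?_, ?_⟩
  · have : fstar A b C ≤ (C * (Y * Yᵀ)).trace := csInf_le hbC ⟨_, hYC, rfl⟩
    linarith
  · have hYR : frobNorm Y ≤ Real.sqrt R := by
      apply Real.sqrt_le_sqrt
      unfold frobInner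
      rw [Matrix.trace_mul_comm]
      exact hle _ hYC
    have hSY : 2 * (S * (Y * Yᵀ)).trace ≤ εg * Real.sqrt R := by
      have h1 := aux_frob_cs ((2 : ℝ) • (S * Y)) Y
      have h2 : frobInner ((2 : ℝ) • (S * Y)) Y = 2 * (S * (Y * Yᵀ)).trace := by
        unfold frobInner
        rw [← Matrix.trace_transpose, Matrix.transpose_mul, Matrix.transpose_transpose,
          Matrix.mul_smul, Matrix.trace_smul, Matrix.trace_mul_comm, Matrix.mul_assoc]
        rfl
      rw [← h2]
      exact h1.trans (mul_le_mul hgrad hYR (Real.sqrt_nonneg _) hεg)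
    have hlow : (C * (Y * Yᵀ)).trace - (εH * R + εg * Real.sqrt R) / 2 ≤ fstar A b C := by
      refine le_csInf (Set.Nonempty.image _ ⟨_, hYC⟩) ?_
      rintro _ ⟨X, hX, rfl⟩
      have h3 := aux_trace_mul_nonneg hhess hX.2.2
      rw [Matrix.add_mul, Matrix.trace_add, Matrix.smul_mul, Matrix.one_mul,
        Matrix.trace_smul, smul_eq_mul] at h3
      have h4 := mul_le_mul_of_nonneg_left (hle X hX) hεH
      have h5 := hsplit X hX
      have h6 := hsplit _ hYC
      show _ ≤ (C * X).trace
      linarith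
    linarith

end
end

section
/- Suppose all matrices X ∈ 𝒞 have the same trace and there exists a relative interior point X' ∈ 𝒞, i.e., X' is positive definite and 𝒜(X') = b (Slater condition). Then the identity matrix lies in the image of 𝒜*: there exists ν ∈ ℝ^m such that ν_1 A_1 + ... + ν_m A_m = I_n. -/
open Matrix MeasureTheory

noncomputable section

/-- A symmetric matrix becomes positive semidefinite after adding a large multiple of `1`. -/
theorem exists_add_smul_one_psd {n : ℕ} (S : Matrix (Fin n) (Fin n) ℝ) (hS : S.IsSymm) :
    ∃ d : ℝ, 0 < d ∧ (S + d • (1 : Matrix (Fin n) (Fin n) ℝ)).PosSemidef := by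
  have hpos : 0 ≤ ∑ i, ∑ j, |S i j| :=
    Finset.sum_nonneg fun i _ => Finset.sum_nonneg fun j _ => abs_nonneg _
  refine ⟨(∑ i, ∑ j, |S i j|) + 1, by linarith, ?_⟩
  refine PosSemidef.of_dotProduct_mulVec_nonneg ?_ fun x => ?_
  · show _ᴴ = _
    rw [conjTranspose_eq_transpose_of_trivial]
    simp [hS.eq]
  · have hx : ∀ i, x i ^ 2 ≤ x ⬝ᵥ x := fun i => by
      simp only [dotProduct, ← sq]
      exact Finset.single_le_sum (f := fun i => x i ^ 2) (fun i _ => sq_nonneg _)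
        (Finset.mem_univ i)
    have h0 : 0 ≤ x ⬝ᵥ x := by
      simp only [dotProduct, ← sq]
      exact Finset.sum_nonneg fun i _ => sq_nonneg _
    have h1 : -((∑ i, ∑ j, |S i j|) * (x ⬝ᵥ x)) ≤ x ⬝ᵥ (S *ᵥ x) := by
      have : x ⬝ᵥ (S *ᵥ x) = ∑ i, ∑ j, S i j * (x i * x j) := by
        simp only [dotProduct, mulVec, Finset.mul_sum]
        exact Finset.sum_congr rfl fun i _ => Finset.sum_congr rfl fun j _ => by ring
      rw [this, Finset.sum_mul, ← Finset.sum_neg_distrib]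
      refine Finset.sum_le_sum fun i _ => ?_
      rw [Finset.sum_mul, ← Finset.sum_neg_distrib]
      refine Finset.sum_le_sum fun j _ => ?_
      have h2 : |x i * x j| ≤ x ⬝ᵥ x := by
        rw [abs_le]
        constructor <;> nlinarith [hx i, hx j, sq_nonneg (x i + x j), sq_nonneg (x i - x j)]
      have h3 := mul_le_mul_of_nonneg_left h2 (abs_nonneg (S i j))
      rw [← abs_mul] at h3
      linarith [neg_abs_le (S i j * (x i * x j))]
    simp only [star_trivial, add_mulVec, smul_mulVec, one_mulVec, dotProduct_add,
      dotProduct_smul, smul_eq_mul]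
    nlinarith

open scoped MatrixOrder in
theorem exists_add_smul_posDef_psd {n : ℕ} (S P : Matrix (Fin n) (Fin n) ℝ) (hS : S.IsSymm)
    (hP : P.PosDef) : ∃ d : ℝ, 0 < d ∧ (S + d • P).PosSemidef := by
  obtain ⟨R, hR⟩ := CStarAlgebra.nonneg_iff_eq_star_mul_self.mp hP.posSemidef.nonneg
  rw [star_eq_conjTranspose] at hR
  have hu : IsUnit R.det := by
    have := hP.det_pos
    rw [hR, det_mul] at this
    exact isUnit_iff_ne_zero.mpr fun h => by simp [h] at this
  have hut : IsUnit Rᴴ.det := by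
    rw [conjTranspose_eq_transpose_of_trivial, det_transpose]; exact hu
  obtain ⟨d, hd, h⟩ := exists_add_smul_one_psd ((Rᴴ)⁻¹ * S * R⁻¹) (by
    show _ᵀ = _
    simp [transpose_mul, hS.eq, transpose_nonsing_inv, Matrix.mul_assoc])
  refine ⟨d, hd, ?_⟩
  have h2 := h.conjTranspose_mul_mul_same R
  convert h2 using 1
  rw [Matrix.mul_add, Matrix.add_mul, hR]
  congr 1
  · rw [← Matrix.mul_assoc, ← Matrix.mul_assoc, mul_nonsing_inv _ hut, Matrix.one_mul,
      Matrix.mul_assoc, nonsing_inv_mul _ hu, Matrix.mul_one]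
  · simp

/-- Slater condition plus constant trace implies `I_n ∈ im(𝒜*)`. -/
theorem identity_in_range_of_slater
    (n m : ℕ) (hn : 0 < n) (hm : 0 < m)
    (A : Fin m → Matrix (Fin n) (Fin n) ℝ) (hA : ∀ i, (A i).IsSymm) (b : Fin m → ℝ)
    (htrace : ∀ X ∈ sdpFeas A b, ∀ X' ∈ sdpFeas A b, X.trace = X'.trace)
    (X' : Matrix (Fin n) (Fin n) ℝ) (hX'symm : X'.IsSymm) (hX'pd : X'.PosDef)
    (hX'feas : Aop A X' = b) :
    ∃ ν : Fin m → ℝ, Aadj A ν = 1 := by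
  let L : Fin m → Matrix (Fin n) (Fin n) ℝ →ₗ[ℝ] ℝ := fun i =>
    (traceLinearMap (Fin n) ℝ ℝ).comp (LinearMap.mulLeft ℝ (A i))
  have hL : ∀ i X, L i X = (A i * X).trace := fun i X => rfl
  have hker : ⨅ i, LinearMap.ker (L i) ≤ LinearMap.ker (traceLinearMap (Fin n) ℝ ℝ) := by
    intro X hX
    simp only [Submodule.mem_iInf, LinearMap.mem_ker, hL] at hX
    have hXt : ∀ i, (A i * Xᵀ).trace = 0 := fun i => by
      rw [← trace_transpose, transpose_mul, transpose_transpose, (hA i).eq, trace_mul_comm]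
      exact hX i
    have hS : (X + Xᵀ).IsSymm := isSymm_add_transpose_self X
    obtain ⟨d, hd, h⟩ := exists_add_smul_posDef_psd (X + Xᵀ) X' hS hX'pd
    have h' : (X' + d⁻¹ • (X + Xᵀ)).PosSemidef := by
      have := h.smul (inv_nonneg.mpr hd.le)
      rwa [smul_add, smul_smul, inv_mul_cancel₀ hd.ne', one_smul, add_comm] at this
    have hf : X' + d⁻¹ • (X + Xᵀ) ∈ sdpFeas A b := by
      refine ⟨hX'symm.add (hS.smul _), ?_, h'⟩
      rw [← hX'feas]
      funext i
      simp [Aop, Matrix.mul_add, hX i, hXt i]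
    have ht := htrace _ hf X' ⟨hX'symm, hX'feas, hX'pd.posSemidef⟩
    simp only [trace_add, trace_smul, trace_transpose, smul_eq_mul] at ht
    have h3 : d⁻¹ * (X.trace + X.trace) = 0 := by linarith
    rcases mul_eq_zero.mp h3 with h4 | h4
    · exact absurd h4 (inv_ne_zero hd.ne')
    · show X.trace = 0
      linarith
  obtain ⟨ν, hν⟩ := (Submodule.mem_span_range_iff_exists_fun ℝ).mp
    (mem_span_of_iInf_ker_le_ker hker)
  refine ⟨ν, ext_iff_trace_mul_right.mpr fun X => ?_⟩
  have := LinearMap.congr_fun hν X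
  simp only [LinearMap.sum_apply, LinearMap.smul_apply, hL, traceLinearMap_apply,
    smul_eq_mul] at this
  simp [Aadj, Matrix.sum_mul, trace_sum, this]

end
end

section
/- Let Y ∈ ℳ have deficient column rank, i.e., rank(Y) < p, and let S be any symmetric n×n matrix. If ε_H ≥ 0 is such that 2⟨Ẏ, S Ẏ⟩ ≥ −ε_H ‖Ẏ‖² for all Ẏ ∈ T_Yℳ, then S + (ε_H/2) I_n is positive semidefinite. -/
open Matrix MeasureTheory

noncomputable section

/-- The Frobenius form on rank-one matrices. -/
lemma frobInner_rank_one {n p : ℕ} (x w : Fin n → ℝ) (z : Fin p → ℝ) :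
    frobInner (vecMulVec x z) (vecMulVec w z) = (x ⬝ᵥ w) * (z ⬝ᵥ z) := by
  unfold frobInner
  rw [transpose_vecMulVec, vecMulVec_mul_vecMulVec, trace_vecMulVec]
  simp [smul_dotProduct, dotProduct_smul]

/-- if `Y ∈ ℳ` is column-rank deficient and the quadratic form
`2⟨Ydot, S Ydot⟩` is bounded below by `−ε_H ‖Ydot‖²` on the tangent space, then
`S + (ε_H/2) I ⪰ 0`. -/
theorem S_psd_of_rank_deficient_second_order
    (n m p : ℕ) (hn : 0 < n) (hm : 0 < m) (hp : 0 < p)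
    (A : Fin m → Matrix (Fin n) (Fin n) ℝ) (hA : ∀ i, (A i).IsSymm) (b : Fin m → ℝ)
    (Y : Matrix (Fin n) (Fin p) ℝ) (hY : Y ∈ facFeas A b p) (hrank : Y.rank < p)
    (S : Matrix (Fin n) (Fin n) ℝ) (hSsymm : S.IsSymm)
    (εH : ℝ) (hεH : 0 ≤ εH)
    (hhess : ∀ Ydot ∈ tangentSet A Y,
      -(εH * frobNorm Ydot ^ 2) ≤ 2 * frobInner Ydot (S * Ydot)) :
    (S + (εH / 2) • (1 : Matrix (Fin n) (Fin n) ℝ)).PosSemidef := by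
  have hz : ∃ z : Fin p → ℝ, z ≠ 0 ∧ Y *ᵥ z = 0 := by
    by_contra! hcon
    have hinj : Function.Injective Y.mulVecLin := by
      rw [← LinearMap.ker_eq_bot, LinearMap.ker_eq_bot']
      intro z hz
      by_contra h0
      exact hcon z h0 hz
    have h1 := LinearMap.finrank_range_of_inj hinj
    rw [Module.finrank_fin_fun] at h1
    have h2 : Y.rank = p := h1
    omega
  obtain ⟨z, hz0, hYz⟩ := hz
  have hzz : 0 < z ⬝ᵥ z := by
    have h0 : 0 ≤ z ⬝ᵥ z := Finset.sum_nonneg fun i _ => mul_self_nonneg (z i)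
    exact lt_of_le_of_ne h0 fun h => hz0 (dotProduct_self_eq_zero.mp h.symm)
  refine PosSemidef.of_dotProduct_mulVec_nonneg ?_ ?_
  · have h : (S + (εH / 2) • (1 : Matrix (Fin n) (Fin n) ℝ))ᵀ = S + (εH / 2) • 1 := by
      rw [transpose_add, hSsymm.eq, transpose_smul, transpose_one]
    rw [IsHermitian, conjTranspose_eq_transpose_of_trivial, h]
  · intro x
    have hmem : vecMulVec x z ∈ tangentSet A Y := by
      have h1 : vecMulVec x z * Yᵀ = 0 := by
        rw [vecMulVec_mul, vecMul_transpose, hYz]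
        simp
      have h2 : Y * (vecMulVec x z)ᵀ = 0 := by
        rw [transpose_vecMulVec, mul_vecMulVec, hYz]
        simp
      show Aop A _ = 0
      rw [h1, h2]
      funext i
      simp [Aop]
    have h := hhess _ hmem
    have hxx : 0 ≤ x ⬝ᵥ x := Finset.sum_nonneg fun i _ => mul_self_nonneg (x i)
    rw [frobNorm, mul_vecMulVec, frobInner_rank_one, frobInner_rank_one,
      Real.sq_sqrt (mul_nonneg hxx hzz.le)] at h
    have h3 : 0 ≤ (x ⬝ᵥ S *ᵥ x + εH / 2 * (x ⬝ᵥ x)) * (z ⬝ᵥ z) := by linarith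
    have h4 := nonneg_of_mul_nonneg_left h3 hzz
    rw [star_trivial, add_mulVec, smul_mulVec, one_mulVec, dotProduct_add, dotProduct_smul,
      smul_eq_mul]
    exact h4

end
end

section
/- Let Y ∈ ℳ be a second-order critical point of the factorized problem with deficient column rank, i.e., rank(Y) < p. Then Y is globally optimal for the factorized problem and X = Y Yᵀ is globally optimal for the SDP: Tr(C Y Yᵀ) ≤ Tr(C X) for every X ∈ 𝒞. -/
open Matrix MeasureTheory

noncomputable section

/-- a column-rank-deficient second-order critical point is globally optimal
for the factorized problem, and `Y Yᵀ` is globally optimal for the SDP. -/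
theorem rank_deficient_socp_is_global_optimum
    (n m p : ℕ) (hn : 0 < n) (hm : 0 < m) (hp : 0 < p)
    (A : Fin m → Matrix (Fin n) (Fin n) ℝ) (hA : ∀ i, (A i).IsSymm) (b : Fin m → ℝ)
    (C : Matrix (Fin n) (Fin n) ℝ) (hC : C.IsSymm)
    (Y : Matrix (Fin n) (Fin p) ℝ) (hrank : Y.rank < p)
    (hsocp : IsSOCP A b C Y) :
    (∀ Z ∈ facFeas A b p, (C * (Y * Yᵀ)).trace ≤ (C * (Z * Zᵀ)).trace) ∧
    (∀ X ∈ sdpFeas A b, (C * (Y * Yᵀ)).trace ≤ (C * X).trace) := by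
  obtain ⟨hY, μ, hSY, hS⟩ := hsocp
  have hz : ∃ z : Fin p → ℝ, z ≠ 0 ∧ Y *ᵥ z = 0 := by
    by_contra! hcon
    have hinj : Function.Injective Y.mulVecLin := by
      rw [← LinearMap.ker_eq_bot, LinearMap.ker_eq_bot']
      intro z hz
      by_contra hne
      exact hcon z hne hz
    have h1 := LinearMap.finrank_range_of_inj hinj
    rw [Module.finrank_fin_fun] at h1
    exact absurd h1 (ne_of_lt hrank)
  obtain ⟨z, hz0, hYz⟩ := hz
  have hAdj : (Aadj A μ)ᵀ = Aadj A μ := by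
    unfold Aadj
    rw [Matrix.transpose_sum]
    exact Finset.sum_congr rfl fun i _ => by rw [Matrix.transpose_smul, hA i]
  have hSsymm : (C - Aadj A μ)ᴴ = C - Aadj A μ := by
    rw [Matrix.conjTranspose_eq_transpose_of_trivial, Matrix.transpose_sub, hAdj, hC]
  have hlin : ∀ X, (Aadj A μ * X).trace = ∑ i, μ i * Aop A X i := by
    intro X
    simp [Aadj, Aop, Finset.sum_mul, Matrix.trace_sum, Matrix.trace_smul]
  have hzz : 0 < z ⬝ᵥ z := by
    have h0 : 0 ≤ z ⬝ᵥ z := Finset.sum_nonneg fun i _ => mul_self_nonneg _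
    exact lt_of_le_of_ne h0 fun h => hz0 (dotProduct_self_eq_zero.1 h.symm)
  have hpsd : (C - Aadj A μ).PosSemidef := by
    refine Matrix.PosSemidef.of_dotProduct_mulVec_nonneg hSsymm fun x => ?_
    have e1 : vecMulVec x z * Yᵀ = 0 := by
      rw [Matrix.vecMulVec_mul, Matrix.vecMul_transpose, hYz]
      ext i j; simp [vecMulVec_apply]
    have e2 : Y * (vecMulVec x z)ᵀ = 0 := by
      have := congrArg Matrix.transpose e1
      simpa [Matrix.transpose_mul] using this
    have h := hS (vecMulVec x z) (by
      show Aop A _ = 0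
      rw [e1, e2]
      ext i; simp [Aop])
    have e3 : frobInner (vecMulVec x z) ((C - Aadj A μ) * vecMulVec x z)
        = (x ⬝ᵥ ((C - Aadj A μ) *ᵥ x)) * (z ⬝ᵥ z) := by
      unfold frobInner
      rw [Matrix.mul_vecMulVec, Matrix.transpose_vecMulVec, Matrix.vecMulVec_mul_vecMulVec]
      simp [Matrix.trace_vecMulVec]
    rw [e3] at h
    simpa using nonneg_of_mul_nonneg_left h hzz
  have main : ∀ X ∈ sdpFeas A b, (C * (Y * Yᵀ)).trace ≤ (C * X).trace := by
    rintro X ⟨-, hXb, hX⟩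
    have hsplit : ∀ W, (C * W).trace
        = ((C - Aadj A μ) * W).trace + ∑ i, μ i * Aop A W i := by
      intro W
      rw [← hlin, Matrix.sub_mul, Matrix.trace_sub]; ring
    have hYb : Aop A (Y * Yᵀ) = b := hY
    rw [hsplit, hsplit X, hXb, hYb, ← Matrix.mul_assoc, hSY]
    have hB : ∃ B : Matrix (Fin n) (Fin n) ℝ, X = Bᴴ * B := by
      open scoped MatrixOrder in
      exact CStarAlgebra.nonneg_iff_eq_star_mul_self.1 hX.nonneg
    obtain ⟨B, rfl⟩ := hB
    have h2 := (hpsd.mul_mul_conjTranspose_same B).trace_nonneg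
    have h3 : ((C - Aadj A μ) * (Bᴴ * B)).trace = (B * (C - Aadj A μ) * Bᴴ).trace := by
      rw [← Matrix.mul_assoc, Matrix.trace_mul_comm, Matrix.mul_assoc]
    rw [h3]
    simpa using h2
  refine ⟨fun Z hZ => main _ ⟨?_, hZ, ?_⟩, main⟩
  · show (Z * Zᵀ)ᵀ = Z * Zᵀ
    simp [Matrix.transpose_mul]
  · have := Matrix.posSemidef_self_mul_conjTranspose Z
    rwa [Matrix.conjTranspose_eq_transpose_of_trivial] at this
end
end

section
/- If p > n, then every second-order critical point Y ∈ ℳ of the factorized problem is globally optimal: Tr(C Y Yᵀ) ≤ Tr(C X) for every X ∈ 𝒞, and Tr(C Y Yᵀ) ≤ Tr(C Z Zᵀ) for every Z ∈ ℳ. -/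
open Matrix MeasureTheory

noncomputable section

/-- if `p > n`, every second-order critical point of the factorized problem
is globally optimal, both for the SDP and the factorized problem. -/
theorem socp_is_global_optimum_of_p_gt_n
    (n m p : ℕ) (hn : 0 < n) (hm : 0 < m) (hp : 0 < p) (hpn : n < p)
    (A : Fin m → Matrix (Fin n) (Fin n) ℝ) (hA : ∀ i, (A i).IsSymm) (b : Fin m → ℝ)
    (C : Matrix (Fin n) (Fin n) ℝ) (hC : C.IsSymm)
    (Y : Matrix (Fin n) (Fin p) ℝ) (hsocp : IsSOCP A b C Y) :
    (∀ X ∈ sdpFeas A b, (C * (Y * Yᵀ)).trace ≤ (C * X).trace) ∧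
    (∀ Z ∈ facFeas A b p, (C * (Y * Yᵀ)).trace ≤ (C * (Z * Zᵀ)).trace) := by
  obtain ⟨hY, μ, hSY, hpos⟩ := hsocp
  set S := C - Aadj A μ with hS
  have hSsymm : S.IsSymm := by
    rw [hS]
    refine hC.sub ?_
    unfold Matrix.IsSymm Aadj
    rw [Matrix.transpose_sum]
    exact Finset.sum_congr rfl fun i _ => by rw [Matrix.transpose_smul, hA i]
  obtain ⟨z, hz0, hz⟩ : ∃ z : Fin p → ℝ, z ≠ 0 ∧ Y *ᵥ z = 0 := by
    have h : LinearMap.ker Y.mulVecLin ≠ ⊥ :=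
      LinearMap.ker_ne_bot_of_finrank_lt (by simpa using hpn)
    obtain ⟨z, hz, hz0⟩ := (Submodule.ne_bot_iff _).mp h
    exact ⟨z, hz0, by simpa using hz⟩
  have hzpos : 0 < z ⬝ᵥ z := by
    have h1 : 0 ≤ z ⬝ᵥ z := Finset.sum_nonneg fun i _ => mul_self_nonneg (z i)
    exact lt_of_le_of_ne h1 fun h => hz0 (dotProduct_self_eq_zero.mp h.symm)
  have hquad : ∀ x : Fin n → ℝ, 0 ≤ x ⬝ᵥ (S *ᵥ x) := by
    intro x
    have h1 : vecMulVec x z * Yᵀ = 0 := by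
      rw [Matrix.vecMulVec_mul, Matrix.vecMul_transpose, hz]
      ext i j
      simp [vecMulVec_apply]
    have h2 : Y * (vecMulVec x z)ᵀ = 0 := by
      rw [← Matrix.transpose_transpose Y, ← Matrix.transpose_mul, h1, Matrix.transpose_zero]
    have h3 := hpos (vecMulVec x z) (by
      show Aop A _ = 0
      rw [h1, h2]
      ext i
      simp [Aop])
    have h4 : frobInner (vecMulVec x z) (S * vecMulVec x z) = (z ⬝ᵥ z) * (x ⬝ᵥ (S *ᵥ x)) := by
      unfold frobInner
      rw [Matrix.mul_vecMulVec, Matrix.transpose_vecMulVec, Matrix.vecMulVec_mul_vecMulVec]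
      simp [Matrix.trace_smul, Matrix.trace_vecMulVec, mul_comm]
    rw [h4] at h3
    exact nonneg_of_mul_nonneg_right h3 hzpos
  have hC' : ∀ X : Matrix (Fin n) (Fin n) ℝ, Aop A X = b →
      (C * X).trace = (S * X).trace + ∑ i, μ i * b i := by
    intro X hX
    have : C = S + Aadj A μ := by rw [hS]; abel
    rw [this, Matrix.add_mul, Matrix.trace_add, ← hX]
    congr 1
    simp [Aadj, Aop, Finset.sum_mul, Matrix.trace_sum]
  have key : ∀ X ∈ sdpFeas A b, (C * (Y * Yᵀ)).trace ≤ (C * X).trace := by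
    rintro X ⟨-, hXb, hXp⟩
    rw [hC' _ hY, hC' _ hXb, ← Matrix.mul_assoc, hSY, Matrix.zero_mul, Matrix.trace_zero]
    have hSp : S.PosSemidef := by
      refine Matrix.PosSemidef.of_dotProduct_mulVec_nonneg ?_ fun x => ?_
      · rw [Matrix.IsHermitian, Matrix.conjTranspose_eq_transpose_of_trivial]; exact hSsymm
      · simpa using hquad x
    obtain ⟨B, hB⟩ : ∃ B : Matrix (Fin n) (Fin n) ℝ, X = Bᴴ * B := by
      open scoped MatrixOrder in
      exact CStarAlgebra.nonneg_iff_eq_star_mul_self.mp hXp.nonneg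
    have h5 := (hSp.mul_mul_conjTranspose_same B).trace_nonneg
    rw [Matrix.mul_assoc, Matrix.trace_mul_comm, Matrix.mul_assoc, ← hB] at h5
    linarith
  refine ⟨key, fun Z hZ => key _ ⟨?_, hZ, ?_⟩⟩
  · rw [Matrix.IsSymm, Matrix.transpose_mul, Matrix.transpose_transpose]
  · simpa using Matrix.posSemidef_self_mul_conjTranspose Z

end
end

section
/- Assume p(p+1)/2 > m. Then the set {C symmetric n×n : there exists ν ∈ ℝ^m with dim ker(C − 𝒜*(ν)) ≥ p} is a null set of symmetric matrices; that is, for almost all symmetric C, every matrix of the form C − 𝒜*(ν) has nullity strictly less than p. -/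
open Matrix MeasureTheory

noncomputable section

/-- Coordinate selection: a tall matrix with independent columns has an invertible square block. -/
lemma exists_unit_submatrix {n p : ℕ} (V : Matrix (Fin n) (Fin p) ℝ)
    (hV : LinearIndependent ℝ V.col) :
    ∃ f : Fin p → Fin n, Function.Injective f ∧ IsUnit (V.submatrix f id) := by
  obtain ⟨κ, a, ha, hsp, hli⟩ := exists_linearIndependent' ℝ V.row
  have : Finite κ := Finite.of_injective a ha
  have := Fintype.ofFinite κ
  have h1 : V.rank = p := by
    have h := finrank_span_eq_card hV
    rw [← Matrix.rank_eq_finrank_span_cols] at h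
    simpa using h
  have h2 : Fintype.card κ = p := by
    have h := finrank_span_eq_card hli
    rw [hsp, ← Matrix.rank_eq_finrank_span_row, h1] at h
    exact h.symm
  let e : Fin p ≃ κ := (Fintype.equivFinOfCardEq h2).symm
  refine ⟨a ∘ e, ha.comp e.injective, ?_⟩
  rw [← Matrix.linearIndependent_rows_iff_isUnit]
  exact hli.comp e e.injective

/-- Inclusion of the complement of the range of `f`. -/
abbrev cval {n p : ℕ} (f : Fin p → Fin n) : {i : Fin n // i ∉ Set.range f} → Fin n :=
  Subtype.val

/-- Coefficients expressing all columns through the columns outside the range of `f`. -/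
def coefMat {n p : ℕ} (f : Fin p → Fin n)
    (B : {i : Fin n // i ∉ Set.range f} × Fin p → ℝ) :
    Matrix {i : Fin n // i ∉ Set.range f} (Fin n) ℝ :=
  Matrix.of fun k l => (if (k : Fin n) = l then 1 else 0) - ∑ j, if f j = l then B (k, j) else 0

open Classical in
lemma factor_aux {n p : ℕ} (f : Fin p → Fin n) (hf : Function.Injective f)
    (N : Matrix (Fin n) (Fin n) ℝ) (W : Matrix (Fin n) (Fin p) ℝ)
    (hW : W.submatrix f id = 1) (hNW : N * W = 0) :
    N = N.submatrix id (cval f) *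
      coefMat f (fun q => W q.1 q.2) := by
  have key : ∀ (g : Fin n → ℝ), ∑ l, g l =
      (∑ k : {i : Fin n // i ∉ Set.range f}, g k) + ∑ j, g (f j) := by
    intro g
    rw [← Fintype.sum_subtype_add_sum_subtype (fun i => i ∉ Set.range f) g]
    congr 1
    symm
    refine Fintype.sum_equiv ((Equiv.ofInjective f hf).trans
      (Equiv.subtypeEquivRight (by simp))) _ _ ?_
    intro j
    rfl
  ext a b
  rw [Matrix.mul_apply]
  by_cases hb : b ∈ Set.range f
  · obtain ⟨j, rfl⟩ := hb
    have h0 := congrFun (congrFun hNW a) j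
    rw [Matrix.mul_apply, key] at h0
    have h1 : ∀ i, W (f i) j = if i = j then 1 else 0 := by
      intro i
      have := congrFun (congrFun hW i) j
      simpa [Matrix.one_apply] using this
    simp only [h1] at h0
    have h2 : ∀ k : {i : Fin n // i ∉ Set.range f}, (k : Fin n) ≠ f j := fun k hk =>
      k.2 ⟨j, hk.symm⟩
    simp [coefMat, h2, hf.eq_iff] at h0 ⊢
    linarith
  · have h2 : ∀ j, f j ≠ b := fun j hj => hb ⟨j, hj⟩
    simp only [coefMat, Matrix.of_apply, h2, if_false, Finset.sum_const_zero, sub_zero,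
      Matrix.submatrix_apply, id]
    rw [Finset.sum_eq_single ⟨b, hb⟩]
    · simp
    · intro k _ hk
      have : (k : Fin n) ≠ b := fun h => hk (Subtype.ext h)
      simp [this]
    · simp

open Classical in
lemma factor_symm {n p : ℕ} (f : Fin p → Fin n) (hf : Function.Injective f)
    (N : Matrix (Fin n) (Fin n) ℝ) (hN : N.IsSymm) (W : Matrix (Fin n) (Fin p) ℝ)
    (hW : W.submatrix f id = 1) (hNW : N * W = 0) :
    N = (coefMat f (fun q => W q.1 q.2))ᵀ *
      N.submatrix (cval f) (cval f) *
      coefMat f (fun q => W q.1 q.2) := by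
  have h := factor_aux f hf N W hW hNW
  set K := coefMat f (fun q => W q.1 q.2) with hK
  have h2 : N.submatrix (cval f) id =
      N.submatrix (cval f) (cval f) * K := by
    conv_lhs => rw [h]
    rfl
  calc N = Nᵀ := hN.symm
    _ = (N.submatrix id (cval f) * K)ᵀ := by rw [← h]
    _ = Kᵀ * N.submatrix (cval f) id := by
        rw [Matrix.transpose_mul, Matrix.transpose_submatrix, hN.eq]
    _ = _ := by rw [h2, Matrix.mul_assoc]

/-- Symmetric matrix from a function on unordered pairs. -/
def symMat {α : Type*} (x : Sym2 α → ℝ) : Matrix α α ℝ := Matrix.of fun i j => x s(i, j)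

/-- Linear coordinates on symmetric matrices. -/
def symEquiv (n : ℕ) : symmSpace n ≃ₗ[ℝ] (Sym2 (Fin n) → ℝ) where
  toFun C q := C.1 q.out.1 q.out.2
  map_add' _ _ := rfl
  map_smul' _ _ := rfl
  invFun x := ⟨symMat x, by
    show (symMat x)ᵀ = symMat x
    ext i j
    simp [symMat, Sym2.eq_swap]⟩
  left_inv C := by
    ext i j
    have hC : C.1ᵀ = C.1 := C.2
    have h : s((s(i, j) : Sym2 (Fin n)).out.1, (s(i, j) : Sym2 (Fin n)).out.2) = s(i, j) :=
      Quot.out_eq _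
    show C.1 (s(i, j) : Sym2 (Fin n)).out.1 (s(i, j) : Sym2 (Fin n)).out.2 = C.1 i j
    rcases Sym2.eq_iff.1 h with ⟨h1, h2⟩ | ⟨h1, h2⟩
    · rw [h1, h2]
    · rw [h1, h2]
      exact congrFun (congrFun hC i) j
  right_inv x := by
    ext q
    exact congrArg x (Quot.out_eq q)

open Classical in
/-- The parametrization. -/
def paramMap {n m p : ℕ} (A : Fin m → Matrix (Fin n) (Fin n) ℝ) (f : Fin p → Fin n)
    (t : (Sym2 {i : Fin n // i ∉ Set.range f} → ℝ) ×
      ({i : Fin n // i ∉ Set.range f} × Fin p → ℝ) × (Fin m → ℝ)) : Sym2 (Fin n) → ℝ :=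
  fun q => ((coefMat f t.2.1)ᵀ * symMat t.1 * coefMat f t.2.1 + Aadj A t.2.2) q.out.1 q.out.2

lemma paramMap_contDiff {n m p : ℕ} (A : Fin m → Matrix (Fin n) (Fin n) ℝ) (f : Fin p → Fin n) :
    ContDiff ℝ 1 (paramMap A f) := by
  classical
  rw [contDiff_pi]
  intro q
  have hK : ∀ k l, ContDiff ℝ 1 (fun t : (Sym2 {i : Fin n // i ∉ Set.range f} → ℝ) ×
      ({i : Fin n // i ∉ Set.range f} × Fin p → ℝ) × (Fin m → ℝ) => coefMat f t.2.1 k l) := by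
    intro k l
    simp only [coefMat, Matrix.of_apply]
    refine contDiff_const.sub (ContDiff.sum fun j _ => ?_)
    split_ifs
    · fun_prop
    · exact contDiff_const
  simp only [paramMap, Matrix.add_apply, Matrix.mul_apply, Matrix.transpose_apply, Aadj,
    Matrix.sum_apply, Matrix.smul_apply, symMat, Matrix.of_apply, smul_eq_mul]
  refine ContDiff.add (ContDiff.sum fun k _ => ContDiff.mul (ContDiff.sum fun l _ =>
    ContDiff.mul (hK _ _) ?_) (hK _ _)) (ContDiff.sum fun i _ => ?_)
  · fun_prop
  · fun_prop

lemma dim_count {n m p r : ℕ} (h : r + p = n) (hpm : 2 * m < p * (p + 1)) :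
    (r + 1).choose 2 + (r * p + m) < (n + 1).choose 2 := by
  subst h
  have h1 := Nat.triangle_succ r
  have h2 := Nat.triangle_succ (r + p)
  have e1 : 2 * (r + 1).choose 2 = (r + 1) * r := by
    rw [Nat.choose_two_right, Nat.add_sub_cancel, Nat.mul_div_cancel']
    exact (mul_comm r (r + 1)) ▸ (Nat.even_mul_succ_self r).two_dvd
  have e2 : 2 * (r + p + 1).choose 2 = (r + p + 1) * (r + p) := by
    rw [Nat.choose_two_right, Nat.add_sub_cancel, Nat.mul_div_cancel']
    exact (mul_comm (r + p) (r + p + 1)) ▸ (Nat.even_mul_succ_self (r + p)).two_dvd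
  nlinarith

lemma volume_range_paramMap {n m p : ℕ} (A : Fin m → Matrix (Fin n) (Fin n) ℝ)
    (hpm : 2 * m < p * (p + 1)) (f : Fin p → Fin n) (hf : Function.Injective f) :
    volume (Set.range (paramMap A f)) = 0 := by
  classical
  have h1 := (paramMap_contDiff A f).dimH_range_le
  have hr : Fintype.card {i : Fin n // i ∉ Set.range f} + p = n := by
    have h := Fintype.card_subtype_compl (fun i => i ∈ Set.range f)
    have h3 : Fintype.card {i : Fin n // i ∈ Set.range f} = p := by
      have := Fintype.card_congr (Equiv.ofInjective f hf)
      rw [Fintype.card_fin] at this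
      exact (Fintype.card_congr (Equiv.refl _)).trans this.symm
    have h4 : p ≤ n := by simpa using Fintype.card_le_of_injective f hf
    rw [h3, Fintype.card_fin] at h
    omega
  have hlt := dim_count hr hpm
  rw [← hausdorffMeasure_pi_real]
  have := hausdorffMeasure_of_dimH_lt (s := Set.range (paramMap A f))
    (d := (Fintype.card (Sym2 (Fin n)) : NNReal)) ?_
  · simpa using this
  · refine h1.trans_lt ?_
    simp only [Module.finrank_prod, Module.finrank_fintype_fun_eq_card, Fintype.card_prod,
      Sym2.card, Fintype.card_fin]
    exact_mod_cast hlt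

lemma mem_range_paramMap {n m p : ℕ} (A : Fin m → Matrix (Fin n) (Fin n) ℝ)
    (hA : ∀ i, (A i).IsSymm) (C : symmSpace n) (ν : Fin m → ℝ)
    (h : p ≤ Module.finrank ℝ (LinearMap.ker (C.1 - Aadj A ν).mulVecLin)) :
    ∃ f : Fin p → Fin n, Function.Injective f ∧ symEquiv n C ∈ Set.range (paramMap A f) := by
  classical
  set N := C.1 - Aadj A ν with hNdef
  have hN : N.IsSymm := by
    have hC : C.1ᵀ = C.1 := C.2
    show Nᵀ = N
    rw [hNdef, Matrix.transpose_sub, hC, Aadj, Matrix.transpose_sum]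
    simp [Matrix.transpose_smul, (hA _).eq]
  let b := Module.finBasis ℝ (LinearMap.ker N.mulVecLin)
  let v : Fin p → LinearMap.ker N.mulVecLin := fun i => b (Fin.castLE h i)
  have hv : LinearIndependent ℝ v := b.linearIndependent.comp _ (Fin.castLE_injective h)
  have hv' : LinearIndependent ℝ (fun i => (v i : Fin n → ℝ)) :=
    hv.map' (LinearMap.ker N.mulVecLin).subtype (Submodule.ker_subtype _)
  let V : Matrix (Fin n) (Fin p) ℝ := Matrix.of fun i j => (v j : Fin n → ℝ) i
  have hNV : N * V = 0 := by
    ext i j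
    exact congrFun (LinearMap.mem_ker.1 (v j).2) i
  obtain ⟨f, hf, hu⟩ := exists_unit_submatrix V hv'
  refine ⟨f, hf, ?_⟩
  let W := V * (V.submatrix f id)⁻¹
  have hW : W.submatrix f id = 1 := by
    have : W.submatrix f id = V.submatrix f id * (V.submatrix f id)⁻¹ := rfl
    rw [this, Matrix.mul_nonsing_inv _ ((Matrix.isUnit_iff_isUnit_det _).1 hu)]
  have hNW : N * W = 0 := by
    rw [← Matrix.mul_assoc, hNV, Matrix.zero_mul]
  have hfac := factor_symm f hf N hN W hW hNW
  refine ⟨(fun q => symEquiv n C (q.map Subtype.val) -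
    Aadj A ν (q.map Subtype.val).out.1 (q.map Subtype.val).out.2, fun q => W q.1 q.2, ν), ?_⟩
  have hM : symMat (fun q : Sym2 {i : Fin n // i ∉ Set.range f} =>
      symEquiv n C (q.map Subtype.val) -
        Aadj A ν (q.map Subtype.val).out.1 (q.map Subtype.val).out.2) =
      N.submatrix (cval f) (cval f) := by
    ext i j
    have := congrArg (fun X : symmSpace n => X.1 i j) ((symEquiv n).left_inv ⟨N, hN⟩)
    exact this
  ext q
  simp only [paramMap]
  rw [hM, ← hfac, hNdef]
  rw [sub_add_cancel]
  rfl

/-- if `p(p+1)/2 > m`, then for almost all symmetric `C`, every matrix of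
the form `C − 𝒜*(ν)` has nullity less than `p`. -/
theorem generic_nullity_lt_p
    (n m p : ℕ) (hn : 0 < n) (hm : 0 < m) (hp : 0 < p)
    (A : Fin m → Matrix (Fin n) (Fin n) ℝ) (hA : ∀ i, (A i).IsSymm)
    (hpm : 2 * m < p * (p + 1)) :
    IsNullSymmSet n {C | ∃ ν : Fin m → ℝ,
      p ≤ Module.finrank ℝ (LinearMap.ker (C - Aadj A ν).mulVecLin)} := by
  intro μ hμ
  have : BorelSpace ↥(symmSpace n) := ⟨rfl⟩
  let L : symmSpace n ≃L[ℝ] (Sym2 (Fin n) → ℝ) := (symEquiv n).toContinuousLinearEquiv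
  have hac : μ.map L ≪ volume := Measure.absolutelyContinuous_isAddHaarMeasure _ _
  have hvol : volume (⋃ f : {f : Fin p → Fin n // Function.Injective f},
      Set.range (paramMap A f.1)) = 0 :=
    measure_iUnion_null fun f => volume_range_paramMap A hpm f.1 f.2
  have h0 := hac hvol
  have h1 := (L.toHomeomorph.toMeasurableEquiv.map_apply (μ := μ) _).symm.trans h0
  refine measure_mono_null ?_ h1
  rintro C ⟨ν, hν⟩
  obtain ⟨f, hf, hmem⟩ := mem_range_paramMap A hA C ν hν
  exact Set.mem_iUnion.2 ⟨⟨f, hf⟩, hmem⟩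

end
end

section
/- Let Y ∈ ℳ be such that A_1 Y, ..., A_m Y are linearly independent, and let μ ∈ ℝ^m be the unique solution of the normal equations Tr(A_i 𝒜*(μ) Y Yᵀ) = Tr(A_i C Y Yᵀ) for i = 1, ..., m. Set S = C − 𝒜*(μ). Then 2 S Y lies in T_Yℳ and equals the orthogonal projection, with respect to the Frobenius inner product on ℝ^{n×p}, of 2 C Y onto the subspace T_Yℳ; that is, the Riemannian gradient of f at Y is 2 S Y. -/
open Matrix MeasureTheory

noncomputable section

/-- For symmetric `A`, the two halves of the tangent condition agree. -/
theorem trace_symm_swap {n p : ℕ} (A : Matrix (Fin n) (Fin n) ℝ) (hA : A.IsSymm)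
    (Z Y : Matrix (Fin n) (Fin p) ℝ) :
    (A * (Y * Zᵀ)).trace = (A * (Z * Yᵀ)).trace := by
  rw [← Matrix.trace_transpose (A * (Y * Zᵀ)), Matrix.transpose_mul, Matrix.transpose_mul,
    Matrix.transpose_transpose, hA.eq, Matrix.trace_mul_comm]

/-- Membership in the tangent space, in terms of one half of the condition. -/
theorem mem_tangentSet_iff {n m p : ℕ} (A : Fin m → Matrix (Fin n) (Fin n) ℝ)
    (hA : ∀ i, (A i).IsSymm) (Y Z : Matrix (Fin n) (Fin p) ℝ) :
    Z ∈ tangentSet A Y ↔ ∀ i, (A i * (Z * Yᵀ)).trace = 0 := by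
  simp only [tangentSet, Set.mem_setOf_eq, funext_iff, Aop, Pi.zero_apply]
  refine forall_congr' fun i => ?_
  rw [Matrix.mul_add, Matrix.trace_add, trace_symm_swap (A i) (hA i)]
  constructor <;> intro h <;> linarith

/-- with `μ` solving the normal equations and `S = C − 𝒜*(μ)`, the matrix
`2SY` lies in `T_Yℳ` and `2CY − 2SY` is Frobenius-orthogonal to `T_Yℳ`; that is, `2SY`
is the orthogonal projection of `2CY` onto the tangent space — the Riemannian gradient. -/
theorem riemannian_gradient_is_projected_gradient
    (n m p : ℕ) (hn : 0 < n) (hm : 0 < m) (hp : 0 < p)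
    (A : Fin m → Matrix (Fin n) (Fin n) ℝ) (hA : ∀ i, (A i).IsSymm) (b : Fin m → ℝ)
    (C : Matrix (Fin n) (Fin n) ℝ) (hC : C.IsSymm)
    (Y : Matrix (Fin n) (Fin p) ℝ) (hY : Y ∈ facFeas A b p)
    (hind : LinearIndependent ℝ (fun i => A i * Y))
    (μ : Fin m → ℝ)
    (hμ : ∀ i, (A i * (Aadj A μ * (Y * Yᵀ))).trace = (A i * (C * (Y * Yᵀ))).trace)
    (S : Matrix (Fin n) (Fin n) ℝ) (hS : S = C - Aadj A μ) :
    (2 : ℝ) • (S * Y) ∈ tangentSet A Y ∧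
    ∀ Ydot ∈ tangentSet A Y,
      frobInner ((2 : ℝ) • (C * Y) - (2 : ℝ) • (S * Y)) Ydot = 0 := by
  subst hS
  constructor
  · rw [mem_tangentSet_iff A hA]
    intro i
    have h := hμ i
    rw [Matrix.smul_mul, Matrix.mul_smul, Matrix.trace_smul, Matrix.mul_assoc, Matrix.sub_mul,
      Matrix.mul_sub, Matrix.trace_sub, h, sub_self, smul_zero]
  · intro Z hZ
    rw [mem_tangentSet_iff A hA] at hZ
    have e : (2 : ℝ) • (C * Y) - (2 : ℝ) • ((C - Aadj A μ) * Y)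
        = (2 : ℝ) • (∑ i, μ i • (A i * Y)) := by
      rw [← smul_sub, Matrix.sub_mul, sub_sub_cancel, Aadj, Matrix.sum_mul]
      simp only [Matrix.smul_mul]
    rw [e, frobInner, Matrix.transpose_smul, Matrix.transpose_sum, Matrix.smul_mul,
      Matrix.sum_mul, Matrix.trace_smul, Matrix.trace_sum, Finset.sum_eq_zero, smul_zero]
    intro i _
    rw [Matrix.transpose_smul, Matrix.smul_mul, Matrix.trace_smul, Matrix.transpose_mul,
      (hA i).eq, Matrix.mul_assoc, Matrix.trace_mul_comm, Matrix.mul_assoc, hZ i, smul_zero]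
end
end

section
/- Let Y ∈ ℳ, μ ∈ ℝ^m, and S = C − 𝒜*(μ). If S Y = 0 and S is positive semidefinite, then Tr(C Y Yᵀ) ≤ Tr(C X) for every X ∈ 𝒞; that is, X = Y Yᵀ is a global minimizer of the SDP and Y is a global minimizer of the factorized problem. -/
open Matrix MeasureTheory

noncomputable section

/-- dual certificate. If `S Y = 0` and `S ⪰ 0` with `S = C − 𝒜*(μ)`, then
`Y Yᵀ` is a global minimizer of the SDP (and `Y` of the factorized problem). -/
theorem dual_certificate_global_optimality
    (n m p : ℕ) (hn : 0 < n) (hm : 0 < m) (hp : 0 < p)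
    (A : Fin m → Matrix (Fin n) (Fin n) ℝ) (hA : ∀ i, (A i).IsSymm) (b : Fin m → ℝ)
    (C : Matrix (Fin n) (Fin n) ℝ) (hC : C.IsSymm)
    (Y : Matrix (Fin n) (Fin p) ℝ) (hY : Y ∈ facFeas A b p)
    (μ : Fin m → ℝ) (S : Matrix (Fin n) (Fin n) ℝ) (hS : S = C - Aadj A μ)
    (hSY : S * Y = 0) (hSpsd : S.PosSemidef) :
    ∀ X ∈ sdpFeas A b, (C * (Y * Yᵀ)).trace ≤ (C * X).trace := by
  have key : ∀ Z : Matrix (Fin n) (Fin n) ℝ, Aop A Z = b →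
      (C * Z).trace = (S * Z).trace + ∑ i, μ i * b i := by
    intro Z hZ
    have hC' : C = S + Aadj A μ := by rw [hS]; abel
    rw [hC', Matrix.add_mul, Matrix.trace_add]
    congr 1
    simp only [Aadj, Matrix.sum_mul, Matrix.trace_sum, Matrix.smul_mul, Matrix.trace_smul,
      smul_eq_mul]
    refine Finset.sum_congr rfl fun i _ => ?_
    rw [← hZ]
    rfl
  rintro X ⟨-, hX, hXpsd⟩
  rw [key _ hY, key _ hX, ← Matrix.mul_assoc, hSY, Matrix.zero_mul, Matrix.trace_zero]
  have h : 0 ≤ (S * X).trace := by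
    obtain ⟨k, v, rfl⟩ := Matrix.posSemidef_iff_eq_sum_vecMulVec.mp hXpsd
    rw [Matrix.mul_sum, Matrix.trace_sum]
    refine Finset.sum_nonneg fun i _ => ?_
    rw [Matrix.mul_vecMulVec, Matrix.trace_vecMulVec, dotProduct_comm]
    exact (Matrix.posSemidef_iff_dotProduct_mulVec.mp hSpsd).2 (v i)
  linarith

end
end
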